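/- Let Λ ∈ GL_n(𝔽₂) with δ ≥ 3. If Λ_{(n_w+2,1):(δ,n_w)} ≠ 0 for every n_w ∈ {1,…,δ−2}, then Λ is non-type-preserving: there exists a subset D ⊆ V in standard form of non-trivial type such that the type of DΛ differs from the type of D. -/

import Mathlib

/-! A set `D` in standard form of type `(n_w, n_r, n_b)` is closed under adding the basis vectors
`e_r` of its black bricks. If the row `e_r Λ` has a nonzero coordinate in one of the first `n_w`
bricks, then the images of `v` and `v + e_r` differ in that brick, so a white box of `D` is no
longer white in `DΛ`. When `n_r = 0`, a nonzero entry of `Λ_{(n_w+1,1):(δ,n_w)}` gives such an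
`e_r`, and this submatrix contains `Λ_{(n_w+2,1):(δ,n_w)}`. -/

open Matrix

/-- The index in `Fin (m * δ)` of the `i`-th coordinate of the `j`-th brick. -/
def brickIdx (m δ : ℕ) (j : Fin δ) (i : Fin m) : Fin (m * δ) :=
  ⟨m * j.val + i.val, by
    have h1 : m * j.val + i.val < m * (j.val + 1) := by
      rw [Nat.mul_succ]
      exact Nat.add_lt_add_left i.isLt _
    exact lt_of_lt_of_le h1 (Nat.mul_le_mul le_rfl j.isLt)⟩

/-- The projection of a vector on its `j`-th brick. -/
def brickProj (m δ : ℕ) (v : Fin (m * δ) → ZMod 2) (j : Fin δ) : Fin m → ZMod 2 :=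
  fun i => v (brickIdx m δ j i)

/-- The `j`-th box of a subset `D`: the projection of `D` on the `j`-th brick. -/
def box (m δ : ℕ) (D : Set (Fin (m * δ) → ZMod 2)) (j : Fin δ) : Set (Fin m → ZMod 2) :=
  (fun v => brickProj m δ v j) '' D

/-- A box is white if it is a singleton. -/
def IsWhite {α : Type*} (S : Set α) : Prop := ∃ a, S = {a}

/-- A box is black if it is everything. -/
def IsBlack {α : Type*} (S : Set α) : Prop := S = Set.univ

/-- A box is ruled if it is neither white nor black. -/
def IsRuled {α : Type*} (S : Set α) : Prop := ¬ IsWhite S ∧ ¬ IsBlack S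

/-- The set `{v_w} × R × 𝔽₂^{m·n_b}` in standard form: the first `nw` bricks are fixed
(equal to `w`), the brick number `nw` (0-indexed) lies in `R` when `nr = 1`, and the
remaining bricks are free. -/
def StdSet (m δ nw nr : ℕ) (w : Fin δ → Fin m → ZMod 2) (R : Set (Fin m → ZMod 2)) :
    Set (Fin (m * δ) → ZMod 2) :=
  { v | (∀ j : Fin δ, (j : ℕ) < nw → brickProj m δ v j = w j) ∧
        (nr = 1 → ∀ j : Fin δ, (j : ℕ) = nw → brickProj m δ v j ∈ R) }

/-- `D` is in standard form of type `(nw, nr, nb)`. -/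
def StdForm (m δ : ℕ) (D : Set (Fin (m * δ) → ZMod 2)) (nw nr nb : ℕ) : Prop :=
  nw + nr + nb = δ ∧ nr ≤ 1 ∧
  ∃ (w : Fin δ → Fin m → ZMod 2) (R : Set (Fin m → ZMod 2)),
    (nr = 1 → 2 ≤ R.ncard ∧ R.ncard ≤ 2 ^ m - 1) ∧ D = StdSet m δ nw nr w R

/-- `D` has type `(nw, nr, nb)`: its first `nw` boxes are white, the next `nr` boxes are
ruled, and its last `nb` boxes are black. -/
def HasType (m δ : ℕ) (D : Set (Fin (m * δ) → ZMod 2)) (nw nr nb : ℕ) : Prop :=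
  nw + nr + nb = δ ∧ nr ≤ 1 ∧
  ∀ j : Fin δ,
    ((j : ℕ) < nw → IsWhite (box m δ D j)) ∧
    (nw ≤ (j : ℕ) → (j : ℕ) < nw + nr → IsRuled (box m δ D j)) ∧
    (nw + nr ≤ (j : ℕ) → IsBlack (box m δ D j))

/-- `D` and `E` have the same type: corresponding boxes have the same kind. -/
def SameType (m δ : ℕ) (D E : Set (Fin (m * δ) → ZMod 2)) : Prop :=
  ∀ j : Fin δ,
    (IsWhite (box m δ D j) ↔ IsWhite (box m δ E j)) ∧
    (IsBlack (box m δ D j) ↔ IsBlack (box m δ E j))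

lemma m_le_mul (m d : ℕ) (h : 1 ≤ d) : m ≤ m * d := by
  calc m = m * 1 := (Nat.mul_one m).symm
  _ ≤ m * d := Nat.mul_le_mul le_rfl h

lemma shift_lt (m δ a : ℕ) (ha : a ≤ δ) (k : ℕ) (hk : k < m * (δ - a)) :
    m * a + k < m * δ := by
  have h := Nat.add_lt_add_left hk (m * a)
  rwa [← Nat.mul_add, Nat.add_sub_cancel' ha] at h

/-- The index in `Fin (m * δ)` obtained by skipping the first `a` bricks. -/
def shiftIdx (m δ a : ℕ) (ha : a ≤ δ) (k : Fin (m * (δ - a))) : Fin (m * δ) :=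
  ⟨m * a + k.val, shift_lt m δ a ha k.val k.isLt⟩

/-- The submatrix `Λ_{(a+1,b+1):(δ,δ)}` (blocks with row brick ≥ a and column brick ≥ b). -/
def subBlock (m δ : ℕ) (Λ : Matrix (Fin (m * δ)) (Fin (m * δ)) (ZMod 2))
    (a b : ℕ) (ha : a ≤ δ) (hb : b ≤ δ) :
    Matrix (Fin (m * (δ - a))) (Fin (m * (δ - b))) (ZMod 2) :=
  Matrix.of fun r c => Λ (shiftIdx m δ a ha r) (shiftIdx m δ b hb c)

/-- The column of blocks `Λ_{(a+1,j+1):(δ,j+1)}` (row bricks ≥ a, column brick j). -/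
def subColBlock (m δ : ℕ) (Λ : Matrix (Fin (m * δ)) (Fin (m * δ)) (ZMod 2))
    (a : ℕ) (ha : a ≤ δ) (j : Fin δ) :
    Matrix (Fin (m * (δ - a))) (Fin m) (ZMod 2) :=
  Matrix.of fun r c => Λ (shiftIdx m δ a ha r) (brickIdx m δ j c)

/-- The row of blocks `Λ_{(j+1,1):(j+1,c2)}` (row brick j, column bricks < c2). -/
def rowBlock (m δ : ℕ) (Λ : Matrix (Fin (m * δ)) (Fin (m * δ)) (ZMod 2))
    (j : Fin δ) (c2 : ℕ) (hc : c2 ≤ δ) :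
    Matrix (Fin m) (Fin (m * c2)) (ZMod 2) :=
  Matrix.of fun i c => Λ (brickIdx m δ j i) (Fin.castLE (Nat.mul_le_mul le_rfl hc) c)

/-- The block `Λ_{j+1, j'+1}`. -/
def block (m δ : ℕ) (Λ : Matrix (Fin (m * δ)) (Fin (m * δ)) (ZMod 2)) (j j' : Fin δ) :
    Matrix (Fin m) (Fin m) (ZMod 2) :=
  Matrix.of fun i i' => Λ (brickIdx m δ j i) (brickIdx m δ j' i')

/-- The set `R × 𝔽₂^{m (d-1)}` of vectors of `d` bricks whose first brick lies in `R`. -/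
def rulDomain (m d : ℕ) (hd : 1 ≤ d) (R : Set (Fin m → ZMod 2)) :
    Set (Fin (m * d) → ZMod 2) :=
  { u | (fun i : Fin m => u (Fin.castLE (m_le_mul m d hd) i)) ∈ R }

section Bricks

variable {m δ : ℕ}

lemma brickIdx_bijective :
    Function.Bijective fun p : Fin δ × Fin m => brickIdx m δ p.1 p.2 := by
  convert (finProdFinEquiv.trans (finCongr (Nat.mul_comm δ m))).bijective using 1
  funext p
  exact Fin.ext (Nat.add_comm _ _)

lemma brickIdx_lt_mul_iff {j : Fin δ} {i : Fin m} {k : ℕ} :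
    (brickIdx m δ j i : ℕ) < m * k ↔ (j : ℕ) < k := by
  rw [Nat.mul_comm m k, ← Nat.div_lt_iff_lt_mul i.pos, brickIdx, Nat.mul_add_div i.pos,
    Nat.div_eq_of_lt i.isLt, Nat.add_zero]

lemma brickProj_surjective : Function.Surjective (brickProj m δ) := fun w =>
  have ⟨v, hv⟩ := brickIdx_bijective.injective.surjective_comp_right (Function.uncurry w)
  ⟨v, funext₂ fun j i => congrFun hv (j, i)⟩

lemma brickProj_add_single_of_mul_le {j : Fin δ} {k : ℕ} {r : Fin (m * δ)} (hj : (j : ℕ) < k)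
    (hr : m * k ≤ r) (v : Fin (m * δ) → ZMod 2) (a : ZMod 2) :
    brickProj m δ (v + Pi.single r a) j = brickProj m δ v j := by
  funext i
  have hne : brickIdx m δ j i ≠ r := Fin.ne_of_lt ((brickIdx_lt_mul_iff.2 hj).trans_le hr)
  simp [brickProj, hne]

end Bricks

lemma isWhite_iff_nonempty_and_subsingleton {α : Type*} {S : Set α} :
    IsWhite S ↔ S.Nonempty ∧ S.Subsingleton :=
  Set.exists_eq_singleton_iff_nonempty_subsingleton

section StandardForm

variable {m δ nw nr nb : ℕ} {D : Set (Fin (m * δ) → ZMod 2)}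

lemma stdSet_nonempty (w : Fin δ → Fin m → ZMod 2) {R : Set (Fin m → ZMod 2)}
    (hR : nr = 1 → R.Nonempty) : (StdSet m δ nw nr w R).Nonempty := by
  obtain ⟨a, ha⟩ : ∃ a, nr = 1 → a ∈ R := by
    by_cases hnr : nr = 1
    · exact (hR hnr).imp fun _ ha _ => ha
    · exact ⟨0, fun h => absurd h hnr⟩
  obtain ⟨v, hv⟩ := brickProj_surjective fun j : Fin δ => if (j : ℕ) < nw then w j else a
  refine ⟨v, fun j hj => ?_, fun hnr j hj => ?_⟩
  · exact (congrFun hv j).trans (if_pos hj)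
  · rw [congrFun hv j, if_neg hj.not_lt]
    exact ha hnr

lemma stdForm_stdSet_zero (hnw : nw ≤ δ) (w : Fin δ → Fin m → ZMod 2)
    (R : Set (Fin m → ZMod 2)) : StdForm m δ (StdSet m δ nw 0 w R) nw 0 (δ - nw) :=
  ⟨Nat.add_sub_cancel' hnw, Nat.zero_le 1, w, R, fun h => absurd h Nat.zero_ne_one, rfl⟩

namespace StdForm

lemma nonempty (hD : StdForm m δ D nw nr nb) : D.Nonempty := by
  obtain ⟨-, -, w, R, hR, rfl⟩ := hD
  refine stdSet_nonempty w fun hnr => Set.nonempty_of_ncard_ne_zero ?_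
  exact (Nat.zero_lt_two.trans_le (hR hnr).1).ne'

lemma isWhite_box (hD : StdForm m δ D nw nr nb) {j : Fin δ} (hj : (j : ℕ) < nw) :
    IsWhite (box m δ D j) := by
  refine isWhite_iff_nonempty_and_subsingleton.2 ⟨hD.nonempty.image _, ?_⟩
  obtain ⟨-, -, w, R, -, rfl⟩ := hD
  rintro _ ⟨v, hv, rfl⟩ _ ⟨v', hv', rfl⟩
  exact (hv.1 j hj).trans (hv'.1 j hj).symm

lemma add_single_mem (hD : StdForm m δ D nw nr nb) {r : Fin (m * δ)} (hr : m * (nw + nr) ≤ r)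
    {v : Fin (m * δ) → ZMod 2} (hv : v ∈ D) (a : ZMod 2) : v + Pi.single r a ∈ D := by
  obtain ⟨-, -, w, R, -, rfl⟩ := hD
  refine ⟨fun j hj => ?_, fun hnr j hj => ?_⟩
  · rw [brickProj_add_single_of_mul_le (by omega) hr]
    exact hv.1 j hj
  · rw [brickProj_add_single_of_mul_le (by omega) hr]
    exact hv.2 hnr j hj

end StdForm

end StandardForm

section NotTypePreserving

variable {m δ nw nr nb : ℕ} {D : Set (Fin (m * δ) → ZMod 2)}
  {Λ : Matrix (Fin (m * δ)) (Fin (m * δ)) (ZMod 2)} {r : Fin (m * δ)}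

lemma not_isWhite_box_image_vecMul {v : Fin (m * δ) → ZMod 2} {j : Fin δ} {i : Fin m}
    (hv : v ∈ D) (hvr : v + Pi.single r 1 ∈ D) (hΛ : Λ r (brickIdx m δ j i) ≠ 0) :
    ¬ IsWhite (box m δ ((fun v => v ᵥ* Λ) '' D) j) := by
  intro hwhite
  have heq : brickProj m δ ((v + Pi.single r 1) ᵥ* Λ) j = brickProj m δ (v ᵥ* Λ) j :=
    (isWhite_iff_nonempty_and_subsingleton.1 hwhite).2
      ⟨_, ⟨_, hvr, rfl⟩, rfl⟩ ⟨_, ⟨v, hv, rfl⟩, rfl⟩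
  rw [add_vecMul, single_one_vecMul] at heq
  exact hΛ (add_eq_left.1 (congrFun heq i))

theorem StdForm.not_sameType_image_vecMul (hD : StdForm m δ D nw nr nb) {c : Fin (m * δ)}
    (hr : m * (nw + nr) ≤ r) (hc : (c : ℕ) < m * nw) (hΛ : Λ r c ≠ 0) :
    ¬ SameType m δ D ((fun v => v ᵥ* Λ) '' D) := by
  intro hsame
  obtain ⟨⟨j, i⟩, rfl⟩ := brickIdx_bijective.surjective c
  obtain ⟨v, hv⟩ := hD.nonempty
  have hwhite : IsWhite (box m δ D j) := hD.isWhite_box (brickIdx_lt_mul_iff.1 hc)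
  exact not_isWhite_box_image_vecMul hv (hD.add_single_mem hr hv 1) hΛ ((hsame j).1.1 hwhite)

theorem stmt_10_general {c : Fin (m * δ)} (hr : m * nw ≤ r) (hc : (c : ℕ) < m * nw)
    (hΛ : Λ r c ≠ 0) :
    ∃ (D : Set (Fin (m * δ) → ZMod 2)) (nw nr nb : ℕ),
      StdForm m δ D nw nr nb ∧ nw ≠ δ ∧ nb ≠ δ ∧
      ¬ SameType m δ D ((fun v => v ᵥ* Λ) '' D) := by
  have hnw : nw < δ := Nat.lt_of_mul_lt_mul_left (hr.trans_lt r.isLt)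
  have hnw_pos : 0 < nw := Nat.pos_of_mul_pos_left (Nat.zero_lt_of_lt hc)
  have hD := stdForm_stdSet_zero (m := m) hnw.le 0 ∅
  exact ⟨_, nw, 0, δ - nw, hD, hnw.ne, by omega, hD.not_sameType_image_vecMul hr hc hΛ⟩

end NotTypePreserving

/-- **Corollary.** If `Λ_{(n_w+2,1):(δ,n_w)} ≠ 0` for every
`n_w ∈ {1, …, δ-2}`, then `Λ` is non-type-preserving: some subset `D` in standard form
of non-trivial type has `type(DΛ) ≠ type(D)`. -/
theorem stmt_10 (m δ : ℕ) (hm : 2 ≤ m) (hδ : 3 ≤ δ)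
    (Λ : Matrix (Fin (m * δ)) (Fin (m * δ)) (ZMod 2)) (hΛ : IsUnit Λ)
    (h : ∀ nw : ℕ, 1 ≤ nw → nw ≤ δ - 2 →
      ∃ r c : Fin (m * δ), m * (nw + 1) ≤ (r : ℕ) ∧ (c : ℕ) < m * nw ∧ Λ r c ≠ 0) :
    ∃ (D : Set (Fin (m * δ) → ZMod 2)) (nw nr nb : ℕ),
      StdForm m δ D nw nr nb ∧ nw ≠ δ ∧ nb ≠ δ ∧
      ¬ SameType m δ D ((fun v => Matrix.vecMul v Λ) '' D) := by
  obtain ⟨r, c, hr, hc, hrc⟩ := h 1 le_rfl (by omega)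
  exact stmt_10_general (by omega) hc hrc
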